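/- With $K$ and the doubly interpolated function $\tilde H_2$ as in the context, the critical points of $\tilde H_2$ in the region $\mathbb{R} \times (1,\infty)$ are precisely the three points $(0,\Lambda_3)$, $(2\pi,\Lambda_3)$ and $(4\pi,\Lambda_3)$. -/

import Mathlib

/-- The Kepler effective Hamiltonian `H₂(y) = -1/(2y²) - y`. -/
noncomputable def H2K (y : ℝ) : ℝ := -(1 / (2 * y ^ 2)) - y

/-- `F(x,y) = ½(y - Λ₃)² - cos(x/2) + B`. -/
noncomputable def Ffun (Λ3 B : ℝ) (x y : ℝ) : ℝ :=
  (y - Λ3) ^ 2 / 2 - Real.cos (x / 2) + B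

/-- The interpolated function `K(x,y) = (1 - f(y)) H₂(y) + f(y) F(x,y)`. -/
noncomputable def Kfun (Λ3 B : ℝ) (f : ℝ → ℝ) (x y : ℝ) : ℝ :=
  (1 - f y) * H2K y + f y * Ffun Λ3 B x y

/-- `G(x,y) = ½x² + ½(y - Λ₃)²`. -/
noncomputable def Gfun (Λ3 : ℝ) (x y : ℝ) : ℝ := x ^ 2 / 2 + (y - Λ3) ^ 2 / 2

/-- `K̃(x,y) = (1 - g(x)) G(x,y) + g(x) K(x,y)`. -/
noncomputable def Ktil (Λ3 B : ℝ) (f g : ℝ → ℝ) (x y : ℝ) : ℝ :=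
  (1 - g x) * Gfun Λ3 x y + g x * Kfun Λ3 B f x y

/-- `G̃(x,y) = ½(x - 4π)² + ½(y - Λ₃)²`. -/
noncomputable def Gtil (Λ3 : ℝ) (x y : ℝ) : ℝ :=
  (x - 4 * Real.pi) ^ 2 / 2 + (y - Λ3) ^ 2 / 2

/-- The doubly interpolated function
`H̃₂(x,y) = g̃(x) K̃(x,y) + (1 - g̃(x)) G̃(x,y)`, with `g̃(x) = g(4π - x)`. -/
noncomputable def H2til (Λ3 B : ℝ) (f g : ℝ → ℝ) (x y : ℝ) : ℝ :=
  g (4 * Real.pi - x) * Ktil Λ3 B f g x y + (1 - g (4 * Real.pi - x)) * Gtil Λ3 x y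

open Real Set Topology

/-!
In the `y` direction, `H̃₂` is, for fixed `x`, a convex combination of `½(y - Λ₃)²` and `K` up to a
constant. Where `f` switches from `H₂` to `F` we have `F ≤ H₂`, and both have negative slope for
`1 < y < Λ₃`, so `K` decreases there, while `K = F` has slope `y - Λ₃` further up. Hence
`∂H̃₂/∂y = 0` exactly when `y = Λ₃`, whatever `x` is. On that line `K = F`, and `H̃₂` has the slope
`½ sin (x/2)` of `F` near `[0, 4π]`. For `x < 0` both `G` and, where `g` does not vanish, `F` have
negative slope and `F ≤ G`, so `H̃₂` decreases; the half-line `x > 4π` is the mirror image under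
`x ↦ 4π - x`.
-/

/-- A differentiable monotone cutoff function, switching from `0` to `1` between `a` and `b`: the
common notion behind the transition functions `f` (in `y`) and `g` (in `x`). -/
structure IsCutoff (a b : ℝ) (φ : ℝ → ℝ) : Prop where
  differentiable : Differentiable ℝ φ
  monotone : Monotone φ
  eq_zero : ∀ t, t ≤ a → φ t = 0
  eq_one : ∀ t, b ≤ t → φ t = 1

namespace IsCutoff

variable {a b : ℝ} {φ : ℝ → ℝ}

theorem lt (h : IsCutoff a b φ) : a < b := by
  by_contra! hba
  exact zero_ne_one ((h.eq_zero a le_rfl).symm.trans (h.eq_one a hba))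

theorem nonneg (h : IsCutoff a b φ) (t : ℝ) : 0 ≤ φ t :=
  (h.eq_zero _ (min_le_left a t)).symm.trans_le (h.monotone (min_le_right a t))

theorem le_one (h : IsCutoff a b φ) (t : ℝ) : φ t ≤ 1 :=
  (h.monotone (le_max_right b t)).trans_eq (h.eq_one _ (le_max_left b t))

theorem deriv_eq_zero (h : IsCutoff a b φ) {t : ℝ} (ht : t ∉ Ioo a b) : deriv φ t = 0 := by
  rcases le_or_gt t a with hta | hta
  · refine IsLocalMin.deriv_eq_zero (.of_forall fun s => ?_)
    rw [h.eq_zero t hta]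
    exact h.nonneg s
  · refine IsLocalMax.deriv_eq_zero (.of_forall fun s => ?_)
    rw [h.eq_one t (not_lt.1 fun htb => ht ⟨hta, htb⟩)]
    exact h.le_one s

end IsCutoff

theorem hasDerivAt_interpolation {φ u v : ℝ → ℝ} {φ' u' v' t : ℝ} (hφ : HasDerivAt φ φ' t)
    (hu : HasDerivAt u u' t) (hv : HasDerivAt v v' t) :
    HasDerivAt (fun s => (1 - φ s) * u s + φ s * v s)
      (φ' * (v t - u t) + ((1 - φ t) * u' + φ t * v')) t :=
  (((hφ.const_sub 1).mul hu).add (hφ.mul hv)).congr_deriv (by ring)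

theorem convex_combination_neg {w p q : ℝ} (hw₀ : 0 ≤ w) (hw₁ : w ≤ 1) (hp : p < 0) (hq : q < 0) :
    (1 - w) * p + w * q < 0 :=
  convex_Iio (𝕜 := ℝ) (0 : ℝ) hp hq (sub_nonneg.2 hw₁) hw₀ (sub_add_cancel 1 w)

theorem IsCutoff.deriv_interpolation_neg {a b : ℝ} {φ u v : ℝ → ℝ} {u' v' t : ℝ}
    (h : IsCutoff a b φ) (hu : HasDerivAt u u' t) (hv : HasDerivAt v v' t) (hu' : u' < 0)
    (hv' : a < t → v' < 0) (hvu : t ∈ Ioo a b → v t ≤ u t) :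
    deriv (fun s => (1 - φ s) * u s + φ s * v s) t < 0 := by
  rw [(hasDerivAt_interpolation (h.differentiable t).hasDerivAt hu hv).deriv]
  have hswitch : deriv φ t * (v t - u t) ≤ 0 := by
    by_cases ht : t ∈ Ioo a b
    · exact mul_nonpos_of_nonneg_of_nonpos h.monotone.deriv_nonneg (sub_nonpos.2 (hvu ht))
    · rw [h.deriv_eq_zero ht, zero_mul]
  have hslopes : (1 - φ t) * u' + φ t * v' < 0 := by
    rcases le_or_gt t a with hta | hta
    · simpa [h.eq_zero t hta] using hu'
    · exact convex_combination_neg (h.nonneg t) (h.le_one t) hu' (hv' hta)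
  exact add_neg_of_nonpos_of_neg hswitch hslopes

theorem hasDerivAt_half_sub_sq (c t : ℝ) : HasDerivAt (fun s => (s - c) ^ 2 / 2) (t - c) t :=
  ((((hasDerivAt_id t).sub_const c).pow 2).div_const 2).congr_deriv (by simp)

theorem hasDerivAt_H2K {y : ℝ} (hy : y ≠ 0) : HasDerivAt H2K (1 / y ^ 3 - 1) y := by
  have hinv := ((hasDerivAt_pow 2 y).const_mul 2).fun_inv (by positivity)
  have hH2K : H2K = fun z => -(2 * z ^ 2)⁻¹ - z := by
    funext z
    rw [H2K, one_div]
  rw [hH2K]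
  refine (hinv.fun_neg.fun_sub (hasDerivAt_id' y)).congr_deriv ?_
  push_cast
  field_simp

theorem one_div_pow_three_sub_one_neg {y : ℝ} (hy : 1 < y) : 1 / y ^ 3 - 1 < 0 := by
  rw [sub_neg, div_lt_one (by positivity)]
  exact one_lt_pow₀ hy three_ne_zero

theorem H2K_nonpos {y : ℝ} (hy : 0 ≤ y) : H2K y ≤ 0 := by
  have : 0 ≤ 1 / (2 * y ^ 2) := by positivity
  unfold H2K
  linarith

theorem sin_half_eq_zero_iff_of_mem_Icc {x : ℝ} (hx : x ∈ Icc 0 (4 * π)) :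
    sin (x / 2) = 0 ↔ x = 0 ∨ x = 2 * π ∨ x = 4 * π := by
  constructor
  · intro h
    obtain ⟨n, hn⟩ := sin_eq_zero_iff.1 h
    have hn₀ : 0 ≤ n := by
      have : (0 : ℝ) ≤ n := nonneg_of_mul_nonneg_left (by linarith [hx.1]) pi_pos
      exact_mod_cast this
    have hn₂ : n ≤ 2 := by
      have : (n : ℝ) ≤ 2 := le_of_mul_le_mul_right (by linarith [hx.2]) pi_pos
      exact_mod_cast this
    interval_cases n
    · exact .inl (by push_cast at hn; linarith)
    · exact .inr (.inl (by push_cast at hn; linarith))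
    · exact .inr (.inr (by push_cast at hn; linarith))
  · rintro (rfl | rfl | rfl)
    · simp
    · simp
    · rw [show 4 * π / 2 = 2 * π by ring, sin_two_pi]

section Hamiltonian

variable {Λ3 B : ℝ}

theorem hasDerivAt_Ffun_fst (x y : ℝ) :
    HasDerivAt (fun x' => Ffun Λ3 B x' y) (sin (x / 2) / 2) x :=
  (((((hasDerivAt_id x).div_const 2).cos).const_sub _).add_const B).congr_deriv
    (by simp only [id]; ring)

theorem hasDerivAt_Ffun_snd (x y : ℝ) : HasDerivAt (Ffun Λ3 B x) (y - Λ3) y :=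
  ((hasDerivAt_half_sub_sq Λ3 y).sub_const _).add_const B

theorem hasDerivAt_Gfun_fst (x y : ℝ) : HasDerivAt (fun x' => Gfun Λ3 x' y) x x := by
  simpa [Gfun] using (hasDerivAt_half_sub_sq 0 x).add_const ((y - Λ3) ^ 2 / 2)

theorem Ffun_le_H2K {y : ℝ} (h : (y - Λ3) ^ 2 / 2 + B + 1 + 1 / (2 * y ^ 2) + y ≤ 0) (x : ℝ) :
    Ffun Λ3 B x y ≤ H2K y := by
  unfold Ffun H2K
  linarith [neg_one_le_cos (x / 2)]

theorem Ffun_le_Gfun (hB : B ≤ 1) (x y : ℝ) : Ffun Λ3 B x y ≤ Gfun Λ3 x y := by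
  unfold Ffun Gfun
  linarith [one_sub_sq_div_two_le_cos (x := x / 2), sq_nonneg x]

theorem le_one_of_Ffun_le_H2K {y : ℝ} (hy : 0 ≤ y) (h : Ffun Λ3 B 0 y ≤ H2K y) : B ≤ 1 := by
  have : (y - Λ3) ^ 2 / 2 - 1 + B ≤ 0 := by simpa [Ffun] using h.trans (H2K_nonpos hy)
  linarith [sq_nonneg (y - Λ3)]

variable {f g : ℝ → ℝ} {a b c d : ℝ}

theorem Kfun_eq_Ffun {y : ℝ} (hfy : f y = 1) (x : ℝ) : Kfun Λ3 B f x y = Ffun Λ3 B x y := by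
  simp [Kfun, hfy]

theorem differentiableAt_Kfun_snd (hf : Differentiable ℝ f) (x : ℝ) {y : ℝ} (hy : y ≠ 0) :
    DifferentiableAt ℝ (Kfun Λ3 B f x) y :=
  (hasDerivAt_interpolation (hf y).hasDerivAt (hasDerivAt_H2K hy)
    (hasDerivAt_Ffun_snd x y)).differentiableAt

theorem deriv_Kfun_snd_neg (hf : IsCutoff a b f)
    (hFH : ∀ x, ∀ y ∈ Icc a b, Ffun Λ3 B x y ≤ H2K y) (x : ℝ) {y : ℝ} (hy : 1 < y)
    (hyΛ : y < Λ3) :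
    deriv (Kfun Λ3 B f x) y < 0 :=
  hf.deriv_interpolation_neg (hasDerivAt_H2K (by positivity)) (hasDerivAt_Ffun_snd x y)
    (one_div_pow_three_sub_one_neg hy) (fun _ => sub_neg.2 hyΛ)
    fun h => hFH x y (Ioo_subset_Icc_self h)

theorem deriv_Kfun_snd_of_lt (hf : IsCutoff a b f) (x : ℝ) {y : ℝ} (hy : b < y) :
    deriv (Kfun Λ3 B f x) y = y - Λ3 := by
  have hKF : Kfun Λ3 B f x =ᶠ[𝓝 y] Ffun Λ3 B x := by
    filter_upwards [lt_mem_nhds hy] with z hz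
    exact Kfun_eq_Ffun (hf.eq_one z hz.le) x
  rw [hKF.deriv_eq, (hasDerivAt_Ffun_snd x y).deriv]

theorem deriv_H2til_snd (hf : Differentiable ℝ f) (x : ℝ) {y : ℝ} (hy : y ≠ 0) :
    deriv (fun y' => H2til Λ3 B f g x y') y =
      (1 - g (4 * π - x) * g x) * (y - Λ3) +
        g (4 * π - x) * g x * deriv (Kfun Λ3 B f x) y := by
  set w := g (4 * π - x) * g x with hw
  have hsplit : (fun y' => H2til Λ3 B f g x y') = fun y' =>
      (1 - w) * ((y' - Λ3) ^ 2 / 2) + w * Kfun Λ3 B f x y' +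
        (g (4 * π - x) * (1 - g x) * (x ^ 2 / 2) +
          (1 - g (4 * π - x)) * ((x - 4 * π) ^ 2 / 2)) := by
    funext y'
    rw [hw]
    unfold H2til Ktil Gtil Gfun
    ring
  rw [hsplit]
  exact ((((hasDerivAt_half_sub_sq Λ3 y).const_mul _).add
    ((differentiableAt_Kfun_snd hf x hy).hasDerivAt.const_mul w)).add_const _).deriv

theorem deriv_H2til_snd_eq_zero_iff (hf : IsCutoff a b f) (hb : b < Λ3)
    (hFH : ∀ x, ∀ y ∈ Icc a b, Ffun Λ3 B x y ≤ H2K y) (hg : IsCutoff c d g) (x : ℝ) {y : ℝ}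
    (hy : 1 < y) : deriv (fun y' => H2til Λ3 B f g x y') y = 0 ↔ y = Λ3 := by
  rw [deriv_H2til_snd hf.differentiable x (by positivity)]
  rcases lt_or_ge y Λ3 with hyΛ | hyΛ
  · have hneg := convex_combination_neg (mul_nonneg (hg.nonneg (4 * π - x)) (hg.nonneg x))
      (mul_le_one₀ (hg.le_one (4 * π - x)) (hg.nonneg x) (hg.le_one x)) (sub_neg.2 hyΛ)
      (deriv_Kfun_snd_neg hf hFH x hy hyΛ)
    exact iff_of_false hneg.ne hyΛ.ne
  · rw [deriv_Kfun_snd_of_lt hf x (hb.trans_le hyΛ), ← add_mul, sub_add_cancel, one_mul,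
      sub_eq_zero]

theorem H2til_eq_Ktil {x : ℝ} (hgx : g (4 * π - x) = 1) (y : ℝ) :
    H2til Λ3 B f g x y = Ktil Λ3 B f g x y := by
  simp [H2til, hgx]

theorem H2til_reflect (hg : IsCutoff c d g) (hd : d ≤ 2 * π) (x y : ℝ) :
    H2til Λ3 B f g (4 * π - x) y = H2til Λ3 B f g x y := by
  have hF : Ffun Λ3 B (4 * π - x) y = Ffun Λ3 B x y := by
    unfold Ffun
    rw [show (4 * π - x) / 2 = 2 * π - x / 2 by ring, cos_two_pi_sub]
  -- The two interpolations do not overlap: one of the two cutoffs equals `1` at each `x`.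
  have hone : g x = 1 ∨ g (4 * π - x) = 1 := by
    rcases le_total x (2 * π) with hx | hx
    · exact .inr (hg.eq_one _ (by linarith))
    · exact .inl (hg.eq_one _ (by linarith))
  unfold H2til Ktil Gtil Gfun Kfun
  rw [hF, sub_sub_cancel]
  rcases hone with hone | hone <;> rw [hone] <;> ring

theorem deriv_H2til_fst_neg (hg : IsCutoff c d g) (hc : -(2 * π) ≤ c) (hd : d ≤ 4 * π)
    (hB : B ≤ 1) {x y : ℝ} (hfy : f y = 1) (hx : x < 0) :
    deriv (fun x' => H2til Λ3 B f g x' y) x < 0 := by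
  have hGF : (fun x' => H2til Λ3 B f g x' y) =ᶠ[𝓝 x]
      fun x' => (1 - g x') * Gfun Λ3 x' y + g x' * Ffun Λ3 B x' y := by
    filter_upwards [gt_mem_nhds hx] with z hz
    rw [H2til_eq_Ktil (hg.eq_one _ (by linarith)), Ktil, Kfun_eq_Ffun hfy]
  have hsin : c < x → sin (x / 2) / 2 < 0 := fun hcx =>
    div_neg_of_neg_of_pos (sin_neg_of_neg_of_neg_pi_lt (by linarith) (by linarith)) two_pos
  rw [hGF.deriv_eq]
  exact hg.deriv_interpolation_neg (hasDerivAt_Gfun_fst x y) (hasDerivAt_Ffun_fst x y) hx hsin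
    fun _ => Ffun_le_Gfun hB x y

theorem deriv_H2til_fst_pos (hg : IsCutoff c d g) (hc : -(2 * π) ≤ c) (hd : d ≤ 2 * π)
    (hB : B ≤ 1) {x y : ℝ} (hfy : f y = 1) (hx : 4 * π < x) :
    0 < deriv (fun x' => H2til Λ3 B f g x' y) x := by
  rw [← funext fun x' => H2til_reflect hg hd x' y,
    deriv_comp_const_sub (fun x' => H2til Λ3 B f g x' y), neg_pos]
  exact deriv_H2til_fst_neg hg hc (by linarith [pi_pos]) hB hfy (sub_neg.2 hx)

theorem deriv_H2til_fst_of_mem_Ioo (hg : IsCutoff c d g) {x y : ℝ} (hfy : f y = 1)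
    (hx : x ∈ Ioo d (4 * π - d)) :
    deriv (fun x' => H2til Λ3 B f g x' y) x = sin (x / 2) / 2 := by
  have hF : (fun x' => H2til Λ3 B f g x' y) =ᶠ[𝓝 x] fun x' => Ffun Λ3 B x' y := by
    filter_upwards [Ioo_mem_nhds hx.1 hx.2] with z hz
    rw [H2til_eq_Ktil (hg.eq_one _ (by linarith [hz.2])), Ktil, hg.eq_one z hz.1.le,
      Kfun_eq_Ffun hfy]
    ring
  rw [hF.deriv_eq, (hasDerivAt_Ffun_fst x y).deriv]

theorem deriv_H2til_fst_eq_zero_iff (hg : IsCutoff c d g) (hc : -(2 * π) ≤ c) (hd : d < 0)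
    (hB : B ≤ 1) {y : ℝ} (hfy : f y = 1) (x : ℝ) :
    deriv (fun x' => H2til Λ3 B f g x' y) x = 0 ↔ x = 0 ∨ x = 2 * π ∨ x = 4 * π := by
  have hπ := pi_pos
  rcases lt_or_ge x 0 with hx₀ | hx₀
  · refine iff_of_false (deriv_H2til_fst_neg hg hc (by linarith) hB hfy hx₀).ne ?_
    rintro (h | h | h) <;> linarith
  rcases lt_or_ge (4 * π) x with hx₄ | hx₄
  · refine iff_of_false (deriv_H2til_fst_pos hg hc (by linarith) hB hfy hx₄).ne' ?_
    rintro (h | h | h) <;> linarith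
  rw [deriv_H2til_fst_of_mem_Ioo hg hfy ⟨by linarith, by linarith⟩,
    div_eq_zero_iff, or_iff_left two_ne_zero, sin_half_eq_zero_iff_of_mem_Icc ⟨hx₀, hx₄⟩]

end Hamiltonian

theorem stmt_8_general {Λ3 B a b c d : ℝ} {f g : ℝ → ℝ} (hf : IsCutoff a b f)
    (ha : 0 < a) (hb : b < Λ3) (hFH : ∀ x, ∀ y ∈ Icc a b, Ffun Λ3 B x y ≤ H2K y)
    (hg : IsCutoff c d g) (hc : -(2 * π) ≤ c) (hd : d < 0) (x y : ℝ) (hy : 1 < y) :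
    (deriv (fun x' => H2til Λ3 B f g x' y) x = 0 ∧
        deriv (fun y' => H2til Λ3 B f g x y') y = 0) ↔
      ((x = 0 ∧ y = Λ3) ∨ (x = 2 * π ∧ y = Λ3) ∨ (x = 4 * π ∧ y = Λ3)) := by
  have hB : B ≤ 1 := le_one_of_Ffun_le_H2K ha.le (hFH 0 a (left_mem_Icc.2 hf.lt.le))
  rw [deriv_H2til_snd_eq_zero_iff hf hb hFH hg x hy, ← or_and_right, ← or_and_right]
  refine and_congr_left fun hyΛ => deriv_H2til_fst_eq_zero_iff hg hc hd hB (hf.eq_one y ?_) x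
  exact hyΛ ▸ hb.le

/-- Lemma 5.1 of the paper: the critical points of `H̃₂` in `ℝ × (1,∞)` are exactly
`(0, Λ₃)`, `(2π, Λ₃)` and `(4π, Λ₃)`. -/
theorem stmt_8 (Λ2 Λ3 ε0 B ε1 : ℝ) (f g : ℝ → ℝ)
    (hΛ2 : 1 < Λ2) (hΛ23 : Λ2 < Λ3)
    (hε0 : 0 < ε0) (hε0' : ε0 < (Λ3 - Λ2) / 2)
    (hB : ∀ y ∈ Set.Icc (Λ2 + ε0) (Λ2 + 2 * ε0),
      (y - Λ3) ^ 2 / 2 + B + 1 + 1 / (2 * y ^ 2) + y ≤ 0)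
    (hf : ContDiff ℝ (⊤ : ℕ∞) f) (hfmono : Monotone f)
    (hfrange : ∀ y, f y ∈ Set.Icc (0 : ℝ) 1)
    (hf0 : ∀ y, y ≤ Λ2 + ε0 → f y = 0)
    (hf1 : ∀ y, Λ2 + 2 * ε0 ≤ y → f y = 1)
    (hε1 : 0 < ε1) (hε1' : ε1 < Real.pi)
    (hg : ContDiff ℝ (⊤ : ℕ∞) g) (hgmono : Monotone g)
    (hgrange : ∀ x, g x ∈ Set.Icc (0 : ℝ) 1)
    (hg0 : ∀ x, x ≤ -(2 * ε1) → g x = 0)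
    (hg1 : ∀ x, -ε1 ≤ x → g x = 1) :
    ∀ x y : ℝ, 1 < y →
      ((deriv (fun x' => H2til Λ3 B f g x' y) x = 0 ∧
        deriv (fun y' => H2til Λ3 B f g x y') y = 0) ↔
        ((x = 0 ∧ y = Λ3) ∨ (x = 2 * Real.pi ∧ y = Λ3) ∨ (x = 4 * Real.pi ∧ y = Λ3))) :=
  stmt_8_general ⟨hf.differentiable (by simp), hfmono, hf0, hf1⟩ (by linarith) (by linarith)
    (fun x y hy => Ffun_le_H2K (hB y hy) x) ⟨hg.differentiable (by simp), hgmono, hg0, hg1⟩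
    (by linarith) (by linarith)
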